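/- Let A be a connected commutative cocommutative graded Hopf algebra over the field F_p (p prime). Then A is isomorphic as a graded algebra to a polynomial algebra if and only if the Frobenius map ξ: A → A, x ↦ x^p, is injective. -/

import Mathlib

/-!
STATEMENT 3: A connected commutative cocommutative graded Hopf algebra `A` over `F_p` is
isomorphic as an algebra to a polynomial algebra iff the Frobenius `x ↦ x^p` is injective.
-/

open TensorProduct

universe u

def IsCocomm (k A : Type*) [CommRing k] [AddCommMonoid A] [Module k A]
    [Coalgebra k A] : Prop :=
  (TensorProduct.comm k A A).toLinearMap ∘ₗ Coalgebra.comul = (Coalgebra.comul : A →ₗ[k] A ⊗[k] A)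

/-!
Homogeneous lifts `x j` of a basis of the indecomposables generate `A`. Being dual to that basis,
the coordinates are tangent vectors at the augmentation, and translation in the Hopf algebra
extends them to global derivations `D i` with `D i (x j) ≡ δ i j` in degree zero. Comparing lowest
degrees, the differentials of the `x j` are linearly independent over `A`, so the ideal of
relations between the `x j` is closed under partial derivatives. When Frobenius is injective it is
closed under `p`-th roots as well, and over a perfect field a relation of minimal degree whose
partial derivatives all vanish is a `p`-th power, hence zero.
-/

section Derivations

open WithConv

/-- `δ` is a derivation of `A` with values in `B`, where `A` acts on `B` through `f`. For `B = k`
this is a tangent vector at the rational point `f`. Mathlib's `Derivation` would need a separate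
`A`-module structure on `B` for each `f`. -/
def IsDerivationAlong {k A B : Type*} [CommSemiring k] [CommSemiring A] [CommSemiring B]
    [Algebra k A] [Algebra k B] (f : A →ₐ[k] B) (δ : A →ₗ[k] B) : Prop :=
  ∀ a b, δ (a * b) = f a * δ b + f b * δ a

namespace IsDerivationAlong

variable {k A B C : Type*} [CommSemiring k] [CommSemiring A] [CommSemiring B] [CommSemiring C]
  [Algebra k B] [Algebra k C]

theorem algHom_comp [Algebra k A] {f : A →ₐ[k] B} {δ : A →ₗ[k] B} (hδ : IsDerivationAlong f δ)
    (g : B →ₐ[k] C) : IsDerivationAlong (g.comp f) (g.toLinearMap ∘ₗ δ) := fun a b => by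
  simp [hδ a b]

theorem convMul [Bialgebra k A] {g : A →ₐ[k] B} {δ : A →ₗ[k] B} (hδ : IsDerivationAlong g δ)
    (f : A →ₐ[k] B) :
    IsDerivationAlong (toConv f * toConv g).ofConv (toConv f.toLinearMap * toConv δ).ofConv := by
  have leibniz (x y : A ⊗[k] A) :
      LinearMap.mul' k B (TensorProduct.map f.toLinearMap δ (x * y)) =
        Algebra.TensorProduct.lift f g (fun _ _ => .all _ _) x *
            LinearMap.mul' k B (TensorProduct.map f.toLinearMap δ y) +
          Algebra.TensorProduct.lift f g (fun _ _ => .all _ _) y *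
            LinearMap.mul' k B (TensorProduct.map f.toLinearMap δ x) := by
    induction x with
    | zero => simp
    | add x₁ x₂ h₁ h₂ => simp only [add_mul, map_add, h₁, h₂, mul_add]; ring
    | tmul a b =>
      induction y with
      | zero => simp
      | add y₁ y₂ h₁ h₂ => simp only [mul_add, map_add, h₁, h₂, add_mul]; ring
      | tmul c d =>
        simp only [Algebra.TensorProduct.tmul_mul_tmul, TensorProduct.map_tmul,
          LinearMap.mul'_apply, AlgHom.toLinearMap_apply, Algebra.TensorProduct.lift_tmul,
          map_mul, hδ b d]
        ring
  intro a b
  have := leibniz (Coalgebra.comul a) (Coalgebra.comul b)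
  rw [← Bialgebra.comul_mul] at this
  simpa [LinearMap.convMul_apply, AlgHom.convMul_apply] using this

end IsDerivationAlong

-- Translating `φ` from `e` to the counit and then along `A` gives `D = id * e⁻¹ * φ`.
theorem exists_derivation_of_isDerivationAlong {k A : Type*} [CommRing k] [CommRing A]
    [HopfAlgebra k A] {e : A →ₐ[k] k} {φ : A →ₗ[k] k} (hφ : IsDerivationAlong e φ) :
    ∃ D : Derivation k A A, ∀ a, e (D a) = φ a := by
  let e' : A →ₐ[k] k := (toConv e)⁻¹.ofConv
  let ψ : A →ₗ[k] k := (toConv e'.toLinearMap * toConv φ).ofConv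
  have hψ : IsDerivationAlong (1 : WithConv (A →ₐ[k] k)).ofConv ψ := by
    rw [← inv_mul_cancel (toConv e)]
    exact hφ.convMul e'
  let η : k →ₐ[k] A := Algebra.ofId k A
  let δ : A →ₗ[k] A := (toConv LinearMap.id * toConv (η.toLinearMap ∘ₗ ψ)).ofConv
  have hδ : IsDerivationAlong (AlgHom.id k A) δ := by
    rw [← ofConv_toConv (AlgHom.id k A), ← mul_one (toConv (AlgHom.id k A))]
    exact (hψ.algHom_comp η).convMul (AlgHom.id k A)
  have heη : e.comp η = AlgHom.id k k := by ext
  have hee' : toConv e.toLinearMap * toConv e'.toLinearMap = 1 :=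
    congrArg (fun f : WithConv (A →ₐ[k] k) => toConv f.ofConv.toLinearMap)
      (mul_inv_cancel (toConv e))
  have heδ : e.toLinearMap ∘ₗ δ = φ := by
    rw [LinearMap.algHom_comp_convMul_distrib]
    simp only [← LinearMap.comp_assoc, ← AlgHom.comp_toLinearMap, heη]
    simp only [AlgHom.toLinearMap_id, LinearMap.id_comp, LinearMap.comp_id, ψ, toConv_ofConv,
      ← mul_assoc, hee', one_mul, ofConv_toConv]
  exact ⟨.mk' δ hδ, DFunLike.congr_fun heδ⟩

end Derivations

section Polynomials

open MvPolynomial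

theorem natCast_exponent_eq_zero_of_pderiv_eq_zero {σ R : Type*} [CommSemiring R] [NoZeroDivisors R]
    {f : MvPolynomial σ R} {i : σ} (hf : pderiv i f = 0) {m : σ →₀ ℕ} (hm : m ∈ f.support) :
    (m i : R) = 0 := by
  rcases Nat.eq_zero_or_pos (m i) with hmi | hmi
  · simp [hmi]
  have hle : Finsupp.single i 1 ≤ m := Finsupp.single_le_iff.mpr hmi
  have hexp : (m - Finsupp.single i 1 : σ →₀ ℕ) i + 1 = m i := by
    simpa using Nat.sub_add_cancel hmi
  have hcoeff : 0 = coeff m f * (m i : R) := by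
    have := coeff_pderiv f (m - Finsupp.single i 1) (i := i)
    rwa [hf, coeff_zero, tsub_add_cancel_of_le hle, ← Nat.cast_add_one, hexp] at this
  exact (mul_eq_zero.mp hcoeff.symm).resolve_left (mem_support_iff.mp hm)

theorem exists_pow_eq_of_pderiv_eq_zero {σ k : Type*} [CommSemiring k] [NoZeroDivisors k] (p : ℕ)
    [Fact p.Prime] [CharP k p] [PerfectRing k p] {f : MvPolynomial σ k}
    (hf : ∀ i, pderiv i f = 0) : ∃ g, g ^ p = f := by
  suffices f ∈ (frobenius (MvPolynomial σ k) p).rangeS from this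
  rw [f.as_sum]
  refine sum_mem fun m hm => ?_
  have hdvd (i : σ) : p ∣ m i :=
    (CharP.cast_eq_zero_iff k p _).mp (natCast_exponent_eq_zero_of_pderiv_eq_zero (hf i) hm)
  have hroot : p • m.mapRange (· / p) (Nat.zero_div p) = m := by
    ext i
    simpa using Nat.mul_div_cancel' (hdvd i)
  refine ⟨monomial (m.mapRange (· / p) (Nat.zero_div p))
    ((frobeniusEquiv k p).symm (coeff m f)), ?_⟩
  rw [frobenius_def, monomial_pow, hroot, frobeniusEquiv_symm_pow_p]

theorem totalDegree_eq_zero_of_pderiv_eq_zero {σ R : Type*} [CommSemiring R] [NoZeroDivisors R]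
    [CharZero R] {f : MvPolynomial σ R} (hf : ∀ i, pderiv i f = 0) : f.totalDegree = 0 := by
  rw [totalDegree_eq_zero_iff]
  exact fun m hm i => Nat.cast_eq_zero.mp (natCast_exponent_eq_zero_of_pderiv_eq_zero (hf i) hm)

theorem totalDegree_pow_of_isDomain {σ R : Type*} [CommRing R] [IsDomain R] (f : MvPolynomial σ R)
    (n : ℕ) : (f ^ n).totalDegree = n * f.totalDegree := by
  rcases eq_or_ne f 0 with rfl | hf
  · rcases n.eq_zero_or_pos with rfl | hn
    · simp
    · simp [hn.ne']
  · induction n with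
    | zero => simp
    | succ n ih =>
      rw [pow_succ, totalDegree_mul_of_isDomain (pow_ne_zero n hf) hf, ih, Nat.succ_mul]

theorem exists_pow_eq_and_totalDegree_lt_of_pderiv_eq_zero {σ k : Type*} [CommRing k] [IsDomain k]
    (p : ℕ) [ExpChar k p] [PerfectRing k p] {f : MvPolynomial σ k} (hf : ∀ i, pderiv i f = 0)
    (hdeg : f.totalDegree ≠ 0) : ∃ g, g ^ p = f ∧ g.totalDegree < f.totalDegree := by
  cases ‹ExpChar k p› with
  | zero => exact absurd (totalDegree_eq_zero_of_pderiv_eq_zero hf) hdeg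
  | prime hp =>
    have := Fact.mk hp
    obtain ⟨g, rfl⟩ := exists_pow_eq_of_pderiv_eq_zero p hf
    rw [totalDegree_pow_of_isDomain] at hdeg ⊢
    exact ⟨g, rfl, lt_mul_of_one_lt_left (Nat.pos_of_ne_zero (right_ne_zero_of_mul hdeg)) hp.one_lt⟩

theorem totalDegree_pderiv_lt {σ R : Type*} [CommSemiring R] {i : σ} {f : MvPolynomial σ R}
    (h : pderiv i f ≠ 0) : (pderiv i f).totalDegree < f.totalDegree := by
  have hlt : ∀ m ∈ (pderiv i f).support, (m.sum fun _ n => n) < f.totalDegree := fun m hm => by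
    have hm' : m + Finsupp.single i 1 ∈ f.support := by
      rw [mem_support_iff, coeff_pderiv] at hm
      exact mem_support_iff.mpr (left_ne_zero_of_mul hm)
    have := le_totalDegree hm'
    rw [Finsupp.sum_add_index' (fun _ => rfl) (fun _ _ _ => rfl), Finsupp.sum_single_index rfl]
      at this
    omega
  obtain ⟨m, hm⟩ := support_nonempty.mpr h
  exact (Finset.sup_lt_iff (Nat.zero_lt_of_lt (hlt m hm))).mpr hlt

theorem eq_bot_of_pderiv_mem_of_pow_mem {σ k : Type*} [Field k] {p : ℕ} [ExpChar k p]
    [PerfectRing k p] {J : Ideal (MvPolynomial σ k)} (hJ : J ≠ ⊤)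
    (hpderiv : ∀ f ∈ J, ∀ i, pderiv i f ∈ J) (hpow : ∀ f, f ^ p ∈ J → f ∈ J) : J = ⊥ := by
  rw [eq_bot_iff]
  intro f hf
  induction hn : f.totalDegree using Nat.strong_induction_on generalizing f with
  | _ n ih =>
  subst hn
  have hder (i : σ) : pderiv i f = 0 := by
    by_contra hi
    exact hi (ih _ (totalDegree_pderiv_lt hi) (hpderiv f hf i) rfl)
  by_cases hdeg : f.totalDegree = 0
  · obtain ⟨c, rfl⟩ : ∃ c, f = C c := ⟨_, totalDegree_eq_zero_iff_eq_C.mp hdeg⟩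
    by_contra hc
    have hc0 : c ≠ 0 := fun h => hc (by simp [h])
    exact hJ (J.eq_top_of_isUnit_mem hf ((IsUnit.mk0 c hc0).map C))
  · obtain ⟨g, rfl, hlt⟩ := exists_pow_eq_and_totalDegree_lt_of_pderiv_eq_zero p hder hdeg
    rw [Submodule.mem_bot, ih _ hlt (hpow g hf) rfl, zero_pow (expChar_ne_zero k p)]

theorem derivation_aeval_eq_sum_pderiv {σ R A M : Type*} [CommSemiring R] [CommSemiring A]
    [Algebra R A] [AddCommMonoid M] [Module R M] [Module A M] (d : Derivation R A M) (x : σ → A)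
    {s : Finset σ} {f : MvPolynomial σ R} (hf : f ∈ supported R (s : Set σ)) :
    d (aeval x f) = ∑ j ∈ s, aeval x (pderiv j f) • d (x j) := by
  classical
  induction hf using Algebra.adjoin_induction with
  | mem f hf =>
    obtain ⟨i, hi, rfl⟩ := hf
    rw [aeval_X, Finset.sum_eq_single_of_mem i hi fun j _ hj => by simp [pderiv_X_of_ne hj.symm]]
    simp
  | algebraMap r => simp [algebraMap_eq]
  | add f g _ _ hf hg => simp [hf, hg, add_smul, Finset.sum_add_distrib]
  | mul f g _ _ hf hg =>
    simp only [map_mul, Derivation.leibniz, hf, hg, smul_eq_mul, map_add, add_smul,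
      Finset.sum_add_distrib, Finset.smul_sum, mul_smul]

theorem algebraicIndependent_of_linearIndependent_derivation {k A M σ : Type*} [Field k] {p : ℕ}
    [ExpChar k p] [PerfectRing k p] [CommRing A] [Nontrivial A] [Algebra k A]
    (hfrob : Function.Injective fun a : A => a ^ p) [AddCommGroup M] [Module k M] [Module A M]
    (d : Derivation k A M) {x : σ → A} (hx : LinearIndependent A fun i => d (x i)) :
    AlgebraicIndependent k x := by
  have hpderiv : ∀ f ∈ RingHom.ker (aeval (R := k) x), ∀ i,
      pderiv i f ∈ RingHom.ker (aeval (R := k) x) := fun f hf i => by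
    by_cases hi : i ∈ f.vars
    · refine linearIndependent_iff'.mp hx f.vars (fun j => aeval x (pderiv j f)) ?_ i hi
      rw [← derivation_aeval_eq_sum_pderiv d x (mem_supported_vars f), RingHom.mem_ker.mp hf,
        map_zero]
    · rw [pderiv_eq_zero_of_notMem_vars hi]
      exact zero_mem _
  have hpow (f : MvPolynomial σ k) (hf : f ^ p ∈ RingHom.ker (aeval (R := k) x)) :
      f ∈ RingHom.ker (aeval (R := k) x) := hfrob <| by
    rw [RingHom.mem_ker, map_pow] at hf
    exact hf.trans (zero_pow (expChar_ne_zero k p)).symm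
  exact (RingHom.injective_iff_ker_eq_bot _).mpr
    (eq_bot_of_pderiv_mem_of_pow_mem (RingHom.ker_ne_top _) hpderiv hpow)

end Polynomials

section Graded

open DirectSum

section Module

variable {ι M : Type*} [DecidableEq ι] [AddCommMonoid M]

theorem decompose_mem_of_isHomogeneousElem {S T : Type*} [SetLike S M] [AddSubmonoidClass S M]
    (ℳ : ι → S) [Decomposition ℳ] [SetLike T M] [ZeroMemClass T M] {N : T} {a : M} (haN : a ∈ N)
    (ha : SetLike.IsHomogeneousElem ℳ a) (i : ι) : (decompose ℳ a i : M) ∈ N := by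
  obtain ⟨j, hj⟩ := ha
  rcases eq_or_ne j i with rfl | hji
  · rwa [decompose_of_mem_same ℳ hj]
  · rw [decompose_of_mem_ne ℳ hj hji]
    exact zero_mem N

theorem span_isHomogeneousElem_eq_top {k : Type*} [Semiring k] [Module k M]
    (ℳ : ι → Submodule k M) [Decomposition ℳ] :
    Submodule.span k {a | SetLike.IsHomogeneousElem ℳ a} = ⊤ := by
  rw [eq_top_iff]
  intro a _
  classical
  rw [← sum_support_decompose ℳ a]
  exact sum_mem fun i _ => Submodule.subset_span ⟨i, (decompose ℳ a i).2⟩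

end Module

section Ring

variable {A S : Type*} [SetLike S A]

theorem coe_decompose_mul_apply {ι : Type*} [DecidableEq ι] [AddMonoid ι]
    [Finset.HasAntidiagonal ι] [Semiring A] [AddSubmonoidClass S A] (𝒜 : ι → S) [GradedRing 𝒜]
    (a b : A) (n : ι) :
    (decompose 𝒜 (a * b) n : A) =
      ∑ ij ∈ Finset.HasAntidiagonal.antidiagonal n,
        (decompose 𝒜 a ij.1 : A) * decompose 𝒜 b ij.2 := by
  rw [decompose_mul, coe_mul_apply_eq_sum_antidiagonal]

theorem coe_decompose_mul_of_forall_lt [Semiring A] [AddSubmonoidClass S A] (𝒜 : ℕ → S)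
    [GradedRing 𝒜] {a : A} {n : ℕ} (ha : ∀ m < n, (decompose 𝒜 a m : A) = 0) (b : A) :
    (decompose 𝒜 (a * b) n : A) = decompose 𝒜 a n * decompose 𝒜 b 0 := by
  rw [coe_decompose_mul_apply, Finset.sum_eq_single_of_mem (n, 0) (by simp)]
  rintro ⟨i, j⟩ hij hne
  rw [Finset.HasAntidiagonal.mem_antidiagonal] at hij
  dsimp only at hij ⊢
  rw [ha i (by grind), zero_mul]

theorem linearIndependent_of_decompose_zero_eq [Ring A] [AddSubmonoidClass S A] (𝒜 : ℕ → S)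
    [GradedRing 𝒜] {σ M : Type*} [DecidableEq σ] [AddCommGroup M] [Module A M] {v : σ → M}
    (ψ : σ → M →ₗ[A] A)
    (hψ : ∀ i j, (decompose 𝒜 (ψ i (v j)) 0 : A) = if i = j then 1 else 0) :
    LinearIndependent A v := by
  rw [linearIndependent_iff']
  intro s a ha
  have hcomponent (n : ℕ) : ∀ i ∈ s, (decompose 𝒜 (a i) n : A) = 0 := by
    induction n using Nat.strong_induction_on with
    | _ n ih =>
    intro i hi
    have hsum : ∑ j ∈ s, a j * ψ i (v j) = 0 := by
      simpa using congrArg (ψ i) ha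
    calc (decompose 𝒜 (a i) n : A)
        = ∑ j ∈ s, (decompose 𝒜 (a j * ψ i (v j)) n : A) := by
          rw [Finset.sum_congr rfl fun j hj =>
            coe_decompose_mul_of_forall_lt 𝒜 (fun m hm => ih m hm j hj) _]
          simp [hψ, hi]
      _ = (decompose 𝒜 (∑ j ∈ s, a j * ψ i (v j)) n : A) := by
        rw [decompose_sum, DFinsupp.finsetSum_apply, AddSubmonoidClass.coe_finsetSum]
      _ = 0 := by rw [hsum, decompose_zero, DirectSum.zero_apply, ZeroMemClass.coe_zero]
  intro i hi
  apply (decompose 𝒜).injective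
  ext n
  simpa using hcomponent n i hi

end Ring

section Indecomposables

variable {k A : Type*} [CommRing k] [CommRing A] [Algebra k A] {e : A →ₐ[k] k}

/-- The span of the scalars and the products of two elements of the augmentation ideal `I` of `e`;
the quotient of `A` by it is the module of indecomposables `I / I²`. -/
def decomposables (e : A →ₐ[k] k) : Submodule k A :=
  1 ⊔ (RingHom.ker e ^ 2).restrictScalars k

theorem one_mem_decomposables : 1 ∈ decomposables e :=
  Submodule.mem_sup_left (Submodule.mem_one.mpr ⟨1, map_one _⟩)

theorem mul_mem_decomposables {a b : A} (ha : a ∈ RingHom.ker e) (hb : b ∈ RingHom.ker e) :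
    a * b ∈ decomposables e :=
  Submodule.mem_sup_right (by
    rw [Submodule.restrictScalars_mem, pow_two]
    exact Ideal.mul_mem_mul ha hb)

theorem isDerivationAlong_of_decomposables_le_ker {φ : A →ₗ[k] k}
    (hφ : decomposables e ≤ LinearMap.ker φ) : IsDerivationAlong e φ := by
  intro a b
  have hker (c : A) : c - algebraMap k A (e c) ∈ RingHom.ker e := by simp [RingHom.mem_ker]
  have hone : φ 1 = 0 := hφ one_mem_decomposables
  have hmul : φ ((a - algebraMap k A (e a)) * (b - algebraMap k A (e b))) = 0 :=
    hφ (mul_mem_decomposables (hker a) (hker b))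
  have hab : a * b = (a - algebraMap k A (e a)) * (b - algebraMap k A (e b)) +
      (e a • b + e b • a - (e a * e b) • (1 : A)) := by
    simp only [Algebra.smul_def, map_mul]
    ring
  rw [hab, map_add, hmul]
  simp [hone]

variable (𝒜 : ℕ → Submodule k A) [GradedAlgebra 𝒜]

theorem exists_augmentation_of_connected [FaithfulSMul k A]
    (hconn : ∀ x ∈ 𝒜 0, ∃ c : k, x = c • (1 : A)) :
    ∃ e : A →ₐ[k] k, ∀ a, (decompose 𝒜 a 0 : A) = algebraMap k A (e a) := by
  have hex (a : A) : ∃ c : k, GradedRing.projZeroRingHom 𝒜 a = algebraMap k A c := by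
    obtain ⟨c, hc⟩ := hconn _ (decompose 𝒜 a 0).2
    exact ⟨c, hc.trans (Algebra.algebraMap_eq_smul_one c).symm⟩
  choose e he using hex
  have hinj := FaithfulSMul.algebraMap_injective k A
  exact ⟨
    { toFun := e
      map_one' := hinj (by rw [← he, map_one, map_one])
      map_mul' := fun a b => hinj (by rw [← he, map_mul, map_mul, he, he])
      map_zero' := hinj (by rw [← he, map_zero, map_zero])
      map_add' := fun a b => hinj (by rw [← he, map_add, map_add, he, he])
      commutes' := fun c => hinj (by
        rw [← he]
        exact decompose_of_mem_same 𝒜 (SetLike.algebraMap_mem_graded 𝒜 c)) }, he⟩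

theorem decompose_mul_mem_of_forall_lt {B : Subalgebra k A} {n : ℕ}
    (hB : ∀ m < n, ∀ a, (decompose 𝒜 a m : A) ∈ B) {a b : A}
    (ha : (decompose 𝒜 a 0 : A) = 0) (hb : (decompose 𝒜 b 0 : A) = 0) :
    (decompose 𝒜 (a * b) n : A) ∈ B := by
  rw [coe_decompose_mul_apply]
  refine sum_mem fun ⟨i, j⟩ hij => ?_
  rw [Finset.HasAntidiagonal.mem_antidiagonal] at hij
  rcases Nat.eq_zero_or_pos i with rfl | hi
  · simp [ha]
  rcases Nat.eq_zero_or_pos j with rfl | hj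
  · simp [hb]
  exact B.mul_mem (hB i (by grind) a) (hB j (by grind) b)

theorem adjoin_eq_top_of_span_sup_decomposables_eq_top
    (he : ∀ a, (decompose 𝒜 a 0 : A) = algebraMap k A (e a)) {s : Set A}
    (hs : ∀ a ∈ s, SetLike.IsHomogeneousElem 𝒜 a)
    (hspan : Submodule.span k s ⊔ decomposables e = ⊤) : Algebra.adjoin k s = ⊤ := by
  set B := Algebra.adjoin k s
  have hker : ∀ a ∈ RingHom.ker e, (decompose 𝒜 a 0 : A) = 0 := fun a ha => by
    rw [he, RingHom.mem_ker.mp ha, map_zero]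
  have hcomponent (n : ℕ) : ∀ a : A, (decompose 𝒜 a n : A) ∈ B := by
    induction n using Nat.strong_induction_on with
    | _ n ih =>
    suffices (⊤ : Submodule k A) ≤ B.toSubmodule.comap (GradedAlgebra.proj 𝒜 n) from
      fun a => this trivial
    rw [← hspan, decomposables, Submodule.one_eq_span, sup_le_iff, sup_le_iff, Submodule.span_le,
      Submodule.span_le, Set.singleton_subset_iff]
    refine ⟨fun a ha => ?_, ?_, fun z hz => ?_⟩
    · exact decompose_mem_of_isHomogeneousElem 𝒜 (N := B) (Algebra.subset_adjoin ha) (hs a ha) n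
    · exact decompose_mem_of_isHomogeneousElem 𝒜 B.one_mem (SetLike.isHomogeneousElem_one 𝒜) n
    · rw [Submodule.restrictScalars_mem, pow_two] at hz
      induction hz using Submodule.mul_induction_on' with
      | mem_mul_mem a ha b hb => exact decompose_mul_mem_of_forall_lt 𝒜 ih (hker a ha) (hker b hb)
      | add x _ y _ hx hy => exact add_mem hx hy
  rw [← Algebra.toSubmodule_eq_top, ← top_le_iff, ← span_isHomogeneousElem_eq_top 𝒜,
    Submodule.span_le]
  rintro a ⟨n, hn⟩
  rw [← decompose_of_mem_same 𝒜 hn]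
  exact hcomponent n a

end Indecomposables

section Field

theorem exists_basis_quotient_of_span_eq_top {k : Type*} {V : Type u} [DivisionRing k]
    [AddCommGroup V] [Module k V] (N : Submodule k V) {S : Set V} (hS : Submodule.span k S = ⊤) :
    ∃ (σ : Type u) (x : σ → V) (b : Module.Basis σ k (V ⧸ N)),
      (∀ i, x i ∈ S) ∧ ∀ i, b i = N.mkQ (x i) := by
  have htop : ⊤ ≤ Submodule.span k (N.mkQ '' S) := by
    rw [← Submodule.map_span, hS, Submodule.map_top, Submodule.range_mkQ]
  let b := Module.Basis.ofSpan htop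
  choose x hxS hx using fun i => Module.Basis.ofSpan_subset htop (Set.mem_range_self i)
  exact ⟨_, x, b, hxS, fun i => (hx i).symm⟩

variable {k : Type*} {A : Type u} [Field k] [CommRing A]

theorem exists_homogeneous_generators_with_dual [Algebra k A] (𝒜 : ℕ → Submodule k A)
    [GradedAlgebra 𝒜] {e : A →ₐ[k] k} (he : ∀ a, (decompose 𝒜 a 0 : A) = algebraMap k A (e a)) :
    ∃ (σ : Type u) (x : σ → A) (φ : σ → A →ₗ[k] k), (∀ i, SetLike.IsHomogeneousElem 𝒜 (x i)) ∧
      Algebra.adjoin k (Set.range x) = ⊤ ∧ (∀ i, IsDerivationAlong e (φ i)) ∧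
      ∀ i j, φ i (x j) = Finsupp.single j 1 i := by
  obtain ⟨σ, x, b, hx, hb⟩ :=
    exists_basis_quotient_of_span_eq_top (decomposables e) (span_isHomogeneousElem_eq_top 𝒜)
  refine ⟨σ, x, fun i => b.coord i ∘ₗ (decomposables e).mkQ, hx, ?_, fun i => ?_, fun i j => ?_⟩
  · refine adjoin_eq_top_of_span_sup_decomposables_eq_top 𝒜 he (Set.forall_mem_range.mpr hx) ?_
    have himage : (Submodule.span k (Set.range x)).map (decomposables e).mkQ = ⊤ := by
      rw [Submodule.map_span, ← Set.range_comp, ← b.span_eq]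
      exact congrArg _ (congrArg _ (funext fun i => (hb i).symm))
    rw [sup_comm, ← Submodule.comap_map_mkQ, himage, Submodule.comap_top]
  · exact isDerivationAlong_of_decomposables_le_ker
      ((Submodule.ker_mkQ _).symm.le.trans (LinearMap.ker_le_ker_comp _ _))
  · rw [LinearMap.comp_apply, ← hb, Module.Basis.coord_apply, Module.Basis.repr_self]

theorem exists_homogeneous_algebraicIndependent_generators [HopfAlgebra k A] {p : ℕ} [ExpChar k p]
    [PerfectRing k p] (𝒜 : ℕ → Submodule k A) [GradedAlgebra 𝒜]
    (hconn : ∀ x ∈ 𝒜 0, ∃ c : k, x = c • (1 : A))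
    (hfrob : Function.Injective fun a : A => a ^ p) :
    ∃ (σ : Type u) (x : σ → A), (∀ i, SetLike.IsHomogeneousElem 𝒜 (x i)) ∧
      AlgebraicIndependent k x ∧ Algebra.adjoin k (Set.range x) = ⊤ := by
  classical
  have : Nontrivial A := (Bialgebra.counitAlgHom k A).toRingHom.domain_nontrivial
  obtain ⟨e, he⟩ := exists_augmentation_of_connected 𝒜 hconn
  obtain ⟨σ, x, φ, hx, hgen, hφ, hφx⟩ := exists_homogeneous_generators_with_dual 𝒜 he
  choose D hD using fun i => exists_derivation_of_isDerivationAlong (hφ i)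
  have hlin : LinearIndependent A fun j => KaehlerDifferential.D k A (x j) := by
    refine linearIndependent_of_decompose_zero_eq 𝒜 (fun i => (D i).liftKaehlerDifferential)
      fun i j => ?_
    rw [Derivation.liftKaehlerDifferential_comp_D, he, hD, hφx, Finsupp.single_apply]
    simp [apply_ite, eq_comm]
  exact ⟨σ, x, hx,
    algebraicIndependent_of_linearIndependent_derivation hfrob
      (KaehlerDifferential.D k A) hlin, hgen⟩

end Field

end Graded

-- For `p = 1` the right-hand side holds trivially, and this is Leray's theorem in characteristic
-- zero.
theorem polynomial_iff_frobenius_injective_general {k : Type*} {A : Type u} {p : ℕ} [Field k]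
    [ExpChar k p] [PerfectRing k p] [CommRing A] [HopfAlgebra k A] (𝒜 : ℕ → Submodule k A)
    [GradedAlgebra 𝒜] (hconn : ∀ x ∈ 𝒜 0, ∃ c : k, x = c • (1 : A)) :
    (∃ σ : Type u, Nonempty (A ≃ₐ[k] MvPolynomial σ k)) ↔
      Function.Injective (fun x : A => x ^ p) := by
  constructor
  · rintro ⟨σ, ⟨f⟩⟩ x y hxy
    refine f.injective (frobenius_inj (MvPolynomial σ k) p ?_)
    simpa [frobenius_def] using congrArg f hxy
  · intro hfrob
    obtain ⟨σ, x, -, hind, hgen⟩ :=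
      exists_homogeneous_algebraicIndependent_generators 𝒜 hconn hfrob
    have hsurj : Function.Surjective (MvPolynomial.aeval (R := k) x) := by
      rw [← AlgHom.range_eq_top, ← Algebra.adjoin_range_eq_range_aeval, hgen]
    exact ⟨σ, ⟨(AlgEquiv.ofBijective (MvPolynomial.aeval x) ⟨hind, hsurj⟩).symm⟩⟩

theorem polynomial_iff_frobenius_injective
    (p : ℕ) [Fact p.Prime] (A : Type u)
    [CommRing A] [HopfAlgebra (ZMod p) A]
    (hA : IsCocomm (ZMod p) A)
    (𝒜 : ℕ → Submodule (ZMod p) A) [GradedAlgebra 𝒜]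
    -- connectedness: the degree-zero part is spanned by `1`
    (hconn : ∀ x ∈ 𝒜 0, ∃ c : ZMod p, x = c • (1 : A)) :
    (∃ σ : Type u, Nonempty (A ≃ₐ[ZMod p] MvPolynomial σ (ZMod p))) ↔
      Function.Injective (fun x : A => x ^ p) :=
  polynomial_iff_frobenius_injective_general 𝒜 hconn
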